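/- Let μ ∈ ℝ, η ≥ 0, and suppose (γ0,…,γ6) ∈ ℝ⁷ is a solution of the system S3(μ,η). Then γ0 + γ1 + γ2 + γ3 + γ4 + γ5 + γ6 = 0 and (γ1 + γ3 + γ5)² = (5/3)(1+η)(1−7μ); in particular no real solution of S3(μ,η) exists when μ > 1/7. -/

import Mathlib

/-- The `k = δ = 3` reduced system `S3(μ,η)` for `(γ0, …, γ6)`. -/
def S3 (μ η γ0 γ1 γ2 γ3 γ4 γ5 γ6 : ℝ) : Prop :=
  2 * γ0 * γ6 = -μ / 3 ∧
  2 * γ0 * γ5 + 2 * γ1 * γ6 = (1 / 3) * η * μ + (5 / 2) * μ ∧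
  2 * γ0 * γ4 + 2 * γ1 * γ5 + 2 * γ2 * γ6 = -(5 / 2) * η * μ - (17 / 2) * μ ∧
  2 * γ0 * γ3 + 2 * γ1 * γ4 + 2 * γ2 * γ5 + 2 * γ3 * γ6
    = (17 / 2) * η * μ + (46 / 3) * μ - 1 / 3 ∧
  2 * γ0 * γ2 + 2 * γ1 * γ3 + 2 * γ2 * γ4 + 2 * γ3 * γ5 + 2 * γ4 * γ6
    = -(46 / 3) * η * μ + (1 / 3) * η - (29 / 2) * μ + 3 / 2 ∧
  2 * γ0 * γ1 + 2 * γ1 * γ2 + 2 * γ2 * γ3 + 2 * γ3 * γ4 + 2 * γ4 * γ5 + 2 * γ5 * γ6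
    = (29 / 2) * η * μ - (10 / 3) * η + (11 / 2) * μ - 3 ∧
  γ0 ^ 2 + γ1 ^ 2 + γ2 ^ 2 + γ3 ^ 2 + γ4 ^ 2 + γ5 ^ 2 + γ6 ^ 2
    = -(11 / 2) * η * μ + 3 * η + 11 / 6

/-!
The left-hand sides of `S3` are the autocorrelations of `(γ0, …, γ6)`, that is, the coefficients of
`p(z) p(1/z)` for `p(z) = γ0 + γ1 z + ⋯ + γ6 z⁶`. At `z = ±1` we have `1/z = z`, so the system
prescribes `p(z)²`, and the prescribed value is a multiple of `1 - z`. Hence `p(1) = 0`, and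
`p(-1) = p(-1) - p(1) = -2 (γ1 + γ3 + γ5)` has a known square, whose sign restricts `μ` and `η`.
-/

namespace S3

variable {μ η γ0 γ1 γ2 γ3 γ4 γ5 γ6 : ℝ}

theorem sq_eval_of_sq_eq_one (h : S3 μ η γ0 γ1 γ2 γ3 γ4 γ5 γ6) {z : ℝ} (hz : z ^ 2 = 1) :
    (γ0 + γ1 * z + γ2 * z ^ 2 + γ3 * z ^ 3 + γ4 * z ^ 4 + γ5 * z ^ 5 + γ6 * z ^ 6) ^ 2
      = (10 / 3) * (1 + η) * (1 - 7 * μ) * (1 - z) := by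
  obtain ⟨h6, h5, h4, h3, h2, h1, h0⟩ := h
  obtain rfl | rfl := sq_eq_one_iff.mp hz
  · linear_combination h0 + h1 + h2 + h3 + h4 + h5 + h6
  · linear_combination h0 - h1 + h2 - h3 + h4 - h5 + h6

theorem sum_eq_zero (h : S3 μ η γ0 γ1 γ2 γ3 γ4 γ5 γ6) :
    γ0 + γ1 + γ2 + γ3 + γ4 + γ5 + γ6 = 0 := by
  have sq_eval_one := h.sq_eval_of_sq_eq_one (one_pow 2)
  apply sq_eq_zero_iff.mp
  linear_combination sq_eval_one

theorem sq_odd_sum_eq (h : S3 μ η γ0 γ1 γ2 γ3 γ4 γ5 γ6) :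
    (γ1 + γ3 + γ5) ^ 2 = (5 / 3) * (1 + η) * (1 - 7 * μ) := by
  have sq_eval_neg_one := h.sq_eval_of_sq_eq_one (neg_one_sq (R := ℝ))
  have eval_neg_one : γ0 + γ1 * (-1) + γ2 * (-1) ^ 2 + γ3 * (-1) ^ 3 + γ4 * (-1) ^ 4
      + γ5 * (-1) ^ 5 + γ6 * (-1) ^ 6 = -2 * (γ1 + γ3 + γ5) := by
    linear_combination h.sum_eq_zero
  rw [eval_neg_one] at sq_eval_neg_one
  linear_combination sq_eval_neg_one / 4

theorem one_add_mul_one_sub_nonneg (h : S3 μ η γ0 γ1 γ2 γ3 γ4 γ5 γ6) :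
    0 ≤ (1 + η) * (1 - 7 * μ) := by
  linarith [h.sq_odd_sum_eq, sq_nonneg (γ1 + γ3 + γ5)]

end S3

theorem S3_necessary_conditions_general (μ η : ℝ) :
    (∀ γ0 γ1 γ2 γ3 γ4 γ5 γ6 : ℝ, S3 μ η γ0 γ1 γ2 γ3 γ4 γ5 γ6 →
        γ0 + γ1 + γ2 + γ3 + γ4 + γ5 + γ6 = 0 ∧
        (γ1 + γ3 + γ5) ^ 2 = (5 / 3) * (1 + η) * (1 - 7 * μ)) ∧
    ((1 + η) * (1 - 7 * μ) < 0 →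
      ¬ ∃ γ0 γ1 γ2 γ3 γ4 γ5 γ6 : ℝ, S3 μ η γ0 γ1 γ2 γ3 γ4 γ5 γ6) := by
  refine ⟨fun _ _ _ _ _ _ _ h ↦ ⟨h.sum_eq_zero, h.sq_odd_sum_eq⟩, ?_⟩
  rintro hneg ⟨_, _, _, _, _, _, _, h⟩
  exact hneg.not_ge h.one_add_mul_one_sub_nonneg

/-- **Necessary conditions on solutions of `S3(μ,η)` and the weak coupling condition.**
Any real solution of `S3(μ,η)` with `η ≥ 0` satisfies `γ0 + ⋯ + γ6 = 0` and
`(γ1 + γ3 + γ5)² = (5/3)(1+η)(1-7μ)`; in particular no real solution exists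
when `μ > 1/7`. -/
theorem S3_necessary_conditions (μ η : ℝ) (hη : 0 ≤ η) :
    (∀ γ0 γ1 γ2 γ3 γ4 γ5 γ6 : ℝ, S3 μ η γ0 γ1 γ2 γ3 γ4 γ5 γ6 →
        γ0 + γ1 + γ2 + γ3 + γ4 + γ5 + γ6 = 0 ∧
        (γ1 + γ3 + γ5) ^ 2 = (5 / 3) * (1 + η) * (1 - 7 * μ)) ∧
    (1 / 7 < μ → ¬ ∃ γ0 γ1 γ2 γ3 γ4 γ5 γ6 : ℝ, S3 μ η γ0 γ1 γ2 γ3 γ4 γ5 γ6) := by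
  obtain ⟨conditions, nonexistence⟩ := S3_necessary_conditions_general μ η
  exact ⟨conditions, fun hμ ↦ nonexistence (mul_neg_of_pos_of_neg (by linarith) (by linarith))⟩
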